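/- There exists a constant C > 0 depending only on n such that, for every abstract Monge–Ampère pairing setup (W, B, 𝟙, F) as in the context and all φ₁, φ₂, ψ ∈ F: −B(φ₁−φ₂, φ₁−φ₂, ψ, …, ψ) ≤ C · I(φ₁, φ₂)^{1/2^{n−1}} · (max{I(φ₁, ψ), I(φ₂, ψ)})^{1 − 1/2^{n−1}}, where ψ occupies the last n−1 slots of B. -/

import Mathlib

open Finset

/-- Abstract Monge–Ampère pairing setup with `n = m + 1`: a symmetric multilinear
form `B` on `W^(n+1) = W^(m+2)`, a unit element `one`, and a nonempty convex set
`F ⊆ W`, satisfying (i) normalization `B(𝟙, φ₁, …, φₙ) = 1`, (ii) integration by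
parts `B(u, 𝟙, g₂, …, gₙ) = 0` for `u ∈ W₀` and `gᵢ ∈ W' = span (F ∪ {𝟙})`, and
(iii) the Cauchy–Schwarz / local Hodge index inequality
`B(u, u, φ₁, …, φ_{n-1}) ≤ 0` for `u ∈ W₀`. -/
structure MASetup (m : ℕ) (W : Type*) [AddCommGroup W] [Module ℝ W] where
  B : MultilinearMap ℝ (fun _ : Fin (m + 2) => W) ℝ
  symm : ∀ (v : Fin (m + 2) → W) (σ : Equiv.Perm (Fin (m + 2))), B (v ∘ σ) = B v
  one : W
  F : Set W
  Fne : F.Nonempty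
  Fconv : Convex ℝ F
  unital : ∀ g : Fin (m + 1) → W, (∀ i, g i ∈ F) → B (Fin.cons one g) = 1
  parts : ∀ u ∈ Submodule.span ℝ ({x | ∃ φ ∈ F, ∃ ψ ∈ F, x = φ - ψ} ∪ {one}),
      ∀ g : Fin m → W, (∀ i, g i ∈ Submodule.span ℝ (F ∪ {one})) →
        B (Fin.cons u (Fin.cons one g)) = 0
  hodge : ∀ u ∈ Submodule.span ℝ ({x | ∃ φ ∈ F, ∃ ψ ∈ F, x = φ - ψ} ∪ {one}),
      ∀ g : Fin m → W, (∀ i, g i ∈ F) → B (Fin.cons u (Fin.cons u g)) ≤ 0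

namespace MASetup

variable {m : ℕ} {W : Type*} [AddCommGroup W] [Module ℝ W]

/-- The vector with `j` copies of `φ` followed by copies of `ψ`. -/
def mixVec (φ ψ : W) (j : ℕ) {k : ℕ} : Fin k → W := fun i => if (i : ℕ) < j then φ else ψ

/-- The linear span `W₀` of the differences of elements of `F` together with `one`. -/
def W0 (S : MASetup m W) : Submodule ℝ W :=
  Submodule.span ℝ ({x | ∃ φ ∈ S.F, ∃ ψ ∈ S.F, x = φ - ψ} ∪ {S.one})

/-- The Monge–Ampère energy
`E(φ, ψ) = (n+1)⁻¹ ∑_{j=0}^{n} B(φ-ψ, φ, …, φ, ψ, …, ψ)` with `j` copies of `φ`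
and `n - j` copies of `ψ` among the last `n` arguments. -/
noncomputable def energy (S : MASetup m W) (φ ψ : W) : ℝ :=
  ((m : ℝ) + 2)⁻¹ * ∑ j ∈ Finset.range (m + 2), S.B (Fin.cons (φ - ψ) (mixVec φ ψ j))

/-- The functional `I(φ, ψ) = B(φ-ψ, ψ, …, ψ) - B(φ-ψ, φ, …, φ)`. -/
noncomputable def Ifun (S : MASetup m W) (φ ψ : W) : ℝ :=
  S.B (Fin.cons (φ - ψ) fun _ => ψ) - S.B (Fin.cons (φ - ψ) fun _ => φ)

/-- The functional `J_ψ(φ) = B(φ-ψ, ψ, …, ψ) - E(φ, ψ)`. -/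
noncomputable def Jfun (S : MASetup m W) (ψ φ : W) : ℝ :=
  S.B (Fin.cons (φ - ψ) fun _ => ψ) - S.energy φ ψ

end MASetup

/-! The form `(u, v) ↦ -B(u, v, g₁, …, g_{n-1})` is positive semidefinite on `W₀`, so it satisfies
the Cauchy–Schwarz inequality. Write `v` for the midpoint of `φ₁` and `φ₂`, and put
`bₖ = -B(φ₁-φ₂, φ₁-φ₂, ψ, …, ψ, v, …, v)` with `k` copies of `ψ`. Passing from `bₖ` to `bₖ₊₁`
replaces one `v` by `ψ`; moving the difference `ψ - v` against `φ₁ - φ₂` by symmetry and applying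
Cauchy–Schwarz gives `(bₖ₊₁ - bₖ)² ≤ 8 I(ψ, v) bₖ`. The functional `J` is the Bregman divergence
of minus the energy and is comparable to `I`, so its parallelogram identity at the midpoint bounds
`b₀` and `I(ψ, v)` by multiples of `M = max I(φᵢ, ψ)`, and `b₀` by a multiple of `I(φ₁, φ₂)`. Hence
`bₖ₊₁² ≤ C M bₖ`, and iterating this `n - 1` times gives the exponent `1 / 2^(n-1)`. -/

section SymmetricMultilinear

variable {R M N : Type*} [CommRing R] [AddCommGroup M] [Module R M] [AddCommGroup N] [Module R N]
  {n : ℕ}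

/-- Symmetry of a multilinear map: invariance under all permutations of its arguments. -/
def IsSymmetricMultilinear (f : MultilinearMap R (fun _ : Fin n => M) N) : Prop :=
  ∀ (v : Fin n → M) (σ : Equiv.Perm (Fin n)), f (v ∘ σ) = f v

theorem multilinearMap_cons_sub (f : MultilinearMap R (fun _ : Fin (n + 1) => M) N)
    (x y : M) (g : Fin n → M) :
    f (Fin.cons (x - y) g) = f (Fin.cons x g) - f (Fin.cons y g) := by
  simpa only [MultilinearMap.curryLeft_apply, sub_apply] using
    congrArg (· g) (map_sub f.curryLeft x y)

namespace IsSymmetricMultilinear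

theorem curryLeft {f : MultilinearMap R (fun _ : Fin (n + 1) => M) N}
    (hf : IsSymmetricMultilinear f) (x : M) :
    IsSymmetricMultilinear (M := M) (f.curryLeft x) := by
  intro v σ
  have hcons : (Fin.cons x (v ∘ σ) : Fin (n + 1) → M) =
      Fin.cons x v ∘ Equiv.Perm.decomposeFin.symm (0, σ) := by
    ext i
    cases i using Fin.cases <;> simp
  rw [MultilinearMap.curryLeft_apply, MultilinearMap.curryLeft_apply, hcons, hf]

theorem map_insertNth {f : MultilinearMap R (fun _ : Fin (n + 1) => M) N}
    (hf : IsSymmetricMultilinear f) (i : Fin (n + 1)) (x : M) (g : Fin n → M) :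
    f (i.insertNth x g) = f (Fin.cons x g) := by
  rw [← Fin.cons_comp_cycleRange, hf]

theorem map_cons_cons_comm {f : MultilinearMap R (fun _ : Fin (n + 2) => M) N}
    (hf : IsSymmetricMultilinear f) (x y : M) (g : Fin n → M) :
    f (Fin.cons x (Fin.cons y g)) = f (Fin.cons y (Fin.cons x g)) := by
  rw [← hf.map_insertNth 1 x (Fin.cons y g), ← Fin.succ_zero_eq_one, Fin.insertNth_succ_cons,
    Fin.insertNth_zero']

end IsSymmetricMultilinear

end SymmetricMultilinear

section MixVec

open MASetup (mixVec)

theorem mixVec_zero {W : Type*} (φ ψ : W) {k : ℕ} : (mixVec φ ψ 0 : Fin k → W) = fun _ => ψ := by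
  ext i
  simp [mixVec]

theorem mixVec_of_le {W : Type*} (φ ψ : W) {j k : ℕ} (h : k ≤ j) :
    (mixVec φ ψ j : Fin k → W) = fun _ => φ := by
  ext i
  simp [mixVec, i.isLt.trans_le h]

theorem mixVec_mem {W : Type*} {φ ψ : W} {A : Set W} (hφ : φ ∈ A) (hψ : ψ ∈ A) (j : ℕ) {k : ℕ}
    (i : Fin k) : mixVec φ ψ j i ∈ A := by
  unfold mixVec
  split_ifs <;> assumption

theorem insertNth_right_mixVec {W : Type*} (φ ψ : W) {n : ℕ} (j : Fin (n + 1)) :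
    (j.insertNth ψ (mixVec φ ψ j) : Fin (n + 1) → W) = mixVec φ ψ j := by
  refine Fin.insertNth_eq_iff.2 ⟨by simp [mixVec], ?_⟩
  ext i
  rcases lt_or_ge i.castSucc j with h | h
  · simp [mixVec, Fin.removeNth, Fin.succAbove_of_castSucc_lt _ _ h]
  · have h' : ¬ (i : ℕ) < j ∧ ¬ (i : ℕ) + 1 < j := by
      simp only [Fin.le_def, Fin.val_castSucc] at h
      omega
    simp [mixVec, Fin.removeNth, Fin.succAbove_of_le_castSucc _ _ h, h']

theorem insertNth_left_mixVec {W : Type*} (φ ψ : W) {n : ℕ} (j : Fin (n + 1)) :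
    (j.insertNth φ (mixVec φ ψ j) : Fin (n + 1) → W) = mixVec φ ψ (j + 1) := by
  refine Fin.insertNth_eq_iff.2 ⟨by simp [mixVec], ?_⟩
  ext i
  rcases lt_or_ge i.castSucc j with h | h
  · have h' : (i : ℕ) < j ∧ (i : ℕ) < j + 1 := by
      simp only [Fin.lt_def, Fin.val_castSucc] at h
      omega
    simp [mixVec, Fin.removeNth, Fin.succAbove_of_castSucc_lt _ _ h, h']
  · simp [mixVec, Fin.removeNth, Fin.succAbove_of_le_castSucc _ _ h]

variable {R M N : Type*} [CommRing R] [AddCommGroup M] [Module R M] [AddCommGroup N] [Module R N]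
  {n : ℕ} {f : MultilinearMap R (fun _ : Fin (n + 1) => M) N}

theorem IsSymmetricMultilinear.map_mixVec_succ_sub (hf : IsSymmetricMultilinear f) (φ ψ : M)
    {j : ℕ} (hj : j < n + 1) :
    f (mixVec φ ψ (j + 1)) - f (mixVec φ ψ j) = f (Fin.cons (φ - ψ) (mixVec φ ψ j)) := by
  lift j to Fin (n + 1) using hj
  rw [← insertNth_left_mixVec, ← insertNth_right_mixVec φ ψ j, hf.map_insertNth,
    hf.map_insertNth, multilinearMap_cons_sub]

theorem IsSymmetricMultilinear.sum_map_cons_sub_mixVec (hf : IsSymmetricMultilinear f)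
    (φ ψ : M) :
    ∑ j ∈ range (n + 1), f (Fin.cons (φ - ψ) (mixVec φ ψ j)) =
      f (fun _ => φ) - f (fun _ => ψ) := by
  calc ∑ j ∈ range (n + 1), f (Fin.cons (φ - ψ) (mixVec φ ψ j))
      = ∑ j ∈ range (n + 1), (f (mixVec φ ψ (j + 1)) - f (mixVec φ ψ j)) :=
        sum_congr rfl fun j hj => (hf.map_mixVec_succ_sub φ ψ (mem_range.1 hj)).symm
    _ = f (fun _ => φ) - f (fun _ => ψ) := by
        rw [sum_range_sub fun j => f (mixVec φ ψ j), mixVec_zero, mixVec_of_le φ ψ le_rfl]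

end MixVec

section Functionals

variable {m : ℕ} {W : Type*} [AddCommGroup W] [Module ℝ W]

/-- The Dirichlet form `(u, v) ↦ -B(u, v, g₁, …, gₘ)`, which models
`∫ du ∧ dᶜv ∧ ddᶜg₁ ∧ ⋯ ∧ ddᶜgₘ`. -/
def dirichletForm (B : MultilinearMap ℝ (fun _ : Fin (m + 2) => W) ℝ) (g : Fin m → W) :
    LinearMap.BilinForm ℝ W :=
  LinearMap.mk₂ ℝ (fun u v => -B (Fin.cons u (Fin.cons v g)))
    (fun u u' v => by rw [B.cons_add, neg_add])
    (fun c u v => by rw [B.cons_smul, smul_neg])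
    (fun u v v' => by
      simpa only [MultilinearMap.curryLeft_apply, neg_add] using
        congrArg Neg.neg ((B.curryLeft u).cons_add g v v'))
    (fun c u v => by
      simpa only [MultilinearMap.curryLeft_apply, smul_neg] using
        congrArg Neg.neg ((B.curryLeft u).cons_smul g c v))

/-- Aubin's functional `I` of any multilinear form; `MASetup.Ifun` is the case `B = S.B`. -/
def aubinI (B : MultilinearMap ℝ (fun _ : Fin (m + 2) => W) ℝ) (φ ψ : W) : ℝ :=
  B (Fin.cons (φ - ψ) fun _ => ψ) - B (Fin.cons (φ - ψ) fun _ => φ)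

/-- Aubin's functional `J_ψ(φ)` of an arbitrary multilinear form, written with the energy
`E(φ, ψ)` in its closed form `(n+1)⁻¹ (B(φ, …, φ) - B(ψ, …, ψ))`, where `n = m + 1`. -/
noncomputable def aubinJ (B : MultilinearMap ℝ (fun _ : Fin (m + 2) => W) ℝ) (ψ φ : W) : ℝ :=
  B (Fin.cons (φ - ψ) fun _ => ψ) - ((m : ℝ) + 2)⁻¹ * (B (fun _ => φ) - B fun _ => ψ)

theorem dirichletForm_apply (B : MultilinearMap ℝ (fun _ : Fin (m + 2) => W) ℝ) (g : Fin m → W)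
    (u v : W) : dirichletForm B g u v = -B (Fin.cons u (Fin.cons v g)) :=
  rfl

theorem dirichletForm_cons_sub (B : MultilinearMap ℝ (fun _ : Fin (m + 3) => W) ℝ) (x y : W)
    (g : Fin m → W) :
    dirichletForm B (Fin.cons (x - y) g) =
      dirichletForm B (Fin.cons x g) - dirichletForm B (Fin.cons y g) := by
  ext u v
  have := multilinearMap_cons_sub ((B.curryLeft u).curryLeft v) x y g
  simp only [MultilinearMap.curryLeft_apply] at this
  simp only [LinearMap.sub_apply, dirichletForm_apply, this]
  ring

theorem dirichletForm_cons_midpoint (B : MultilinearMap ℝ (fun _ : Fin (m + 3) => W) ℝ) (x y : W)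
    (g : Fin m → W) :
    (2 : ℝ) • dirichletForm B (Fin.cons (midpoint ℝ x y) g) =
      dirichletForm B (Fin.cons x g) + dirichletForm B (Fin.cons y g) := by
  have h : x - midpoint ℝ x y = midpoint ℝ x y - y := by
    rw [left_sub_midpoint, midpoint_sub_right]
  ext u v
  have huv := congrArg (fun w => dirichletForm B (Fin.cons w g) u v) h
  simp only [dirichletForm_cons_sub, LinearMap.sub_apply] at huv
  simp only [LinearMap.add_apply, LinearMap.smul_apply, smul_eq_mul]
  linarith

theorem aubinI_eq_aubinJ_add_aubinJ (B : MultilinearMap ℝ (fun _ : Fin (m + 2) => W) ℝ)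
    (φ ψ : W) : aubinI B φ ψ = aubinJ B ψ φ + aubinJ B φ ψ := by
  have h := multilinearMap_cons_sub B
  simp only [aubinI, aubinJ, h]
  ring

theorem aubinI_comm (B : MultilinearMap ℝ (fun _ : Fin (m + 2) => W) ℝ) (φ ψ : W) :
    aubinI B φ ψ = aubinI B ψ φ := by
  rw [aubinI_eq_aubinJ_add_aubinJ, aubinI_eq_aubinJ_add_aubinJ, add_comm]

theorem aubinJ_self (B : MultilinearMap ℝ (fun _ : Fin (m + 2) => W) ℝ) (φ : W) :
    aubinJ B φ φ = 0 := by
  rw [aubinJ, multilinearMap_cons_sub, sub_self, sub_self, mul_zero, sub_zero]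

theorem aubinJ_add_aubinJ_eq_midpoint (B : MultilinearMap ℝ (fun _ : Fin (m + 2) => W) ℝ)
    (φ₁ φ₂ ψ : W) :
    aubinJ B ψ φ₁ + aubinJ B ψ φ₂ =
      2 * aubinJ B ψ (midpoint ℝ φ₁ φ₂) +
        (aubinJ B (midpoint ℝ φ₁ φ₂) φ₁ + aubinJ B (midpoint ℝ φ₁ φ₂) φ₂) := by
  set v := midpoint ℝ φ₁ φ₂ with hv
  have h : φ₁ - v = v - φ₂ := by rw [hv, left_sub_midpoint, midpoint_sub_right]
  have hψ := congrArg (fun w => B (Fin.cons w fun _ => ψ)) h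
  have hv' := congrArg (fun w => B (Fin.cons w fun _ => v)) h
  simp only [multilinearMap_cons_sub] at hψ hv'
  simp only [aubinJ, multilinearMap_cons_sub]
  linear_combination hψ - hv'

end Functionals

section SymmetricForm

open MASetup (mixVec)

variable {m : ℕ} {W : Type*} [AddCommGroup W] [Module ℝ W]

namespace IsSymmetricMultilinear

theorem dirichletForm_comm {B : MultilinearMap ℝ (fun _ : Fin (m + 2) => W) ℝ}
    (hB : IsSymmetricMultilinear B) (g : Fin m → W) (u v : W) :
    dirichletForm B g u v = dirichletForm B g v u := by
  rw [dirichletForm_apply, dirichletForm_apply, hB.map_cons_cons_comm]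

theorem dirichletForm_insertNth {B : MultilinearMap ℝ (fun _ : Fin (m + 3) => W) ℝ}
    (hB : IsSymmetricMultilinear B) (i : Fin (m + 1)) (x : W) (g : Fin m → W) :
    dirichletForm B (i.insertNth x g) = dirichletForm B (Fin.cons x g) := by
  ext u v
  simpa only [MultilinearMap.curryLeft_apply, dirichletForm_apply] using
    congrArg Neg.neg (((hB.curryLeft u).curryLeft v).map_insertNth i x g)

theorem dirichletForm_cons_comm {B : MultilinearMap ℝ (fun _ : Fin (m + 3) => W) ℝ}
    (hB : IsSymmetricMultilinear B) (u v w : W) (g : Fin m → W) :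
    dirichletForm B (Fin.cons w g) u v = dirichletForm B (Fin.cons v g) u w := by
  simpa only [MultilinearMap.curryLeft_apply, dirichletForm_apply] using
    congrArg Neg.neg ((hB.curryLeft u).map_cons_cons_comm v w g)

theorem dirichletForm_mixVec_self {B : MultilinearMap ℝ (fun _ : Fin (m + 2) => W) ℝ}
    (hB : IsSymmetricMultilinear B) (φ ψ : W) {j : ℕ} (hj : j < m + 1) :
    dirichletForm B (mixVec φ ψ j) (φ - ψ) (φ - ψ) =
      B (Fin.cons (φ - ψ) (mixVec φ ψ j)) - B (Fin.cons (φ - ψ) (mixVec φ ψ (j + 1))) := by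
  have := (hB.curryLeft (φ - ψ)).map_mixVec_succ_sub φ ψ hj
  simp only [MultilinearMap.curryLeft_apply] at this
  rw [dirichletForm_apply, ← this, neg_sub]

theorem add_two_mul_aubinJ {B : MultilinearMap ℝ (fun _ : Fin (m + 2) => W) ℝ}
    (hB : IsSymmetricMultilinear B) (ψ φ : W) :
    ((m : ℝ) + 2) * aubinJ B ψ φ =
      ∑ j ∈ range (m + 2),
        (B (Fin.cons (φ - ψ) fun _ => ψ) - B (Fin.cons (φ - ψ) (mixVec φ ψ j))) := by
  rw [sum_sub_distrib, hB.sum_map_cons_sub_mixVec, sum_const, card_range, nsmul_eq_mul, aubinJ]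
  push_cast
  field_simp

end IsSymmetricMultilinear

end SymmetricForm

/-- A symmetric multilinear form satisfying the Hodge index inequality
`B(u, u, φ₁, …, φₘ) ≤ 0` for `φᵢ ∈ F` and `u` in the span of the differences of elements
of `F`. -/
structure IsHodgePairing {m : ℕ} {W : Type*} [AddCommGroup W] [Module ℝ W]
    (B : MultilinearMap ℝ (fun _ : Fin (m + 2) => W) ℝ) (F : Set W) : Prop where
  symm : IsSymmetricMultilinear B
  hodge : ∀ u ∈ vectorSpan ℝ F, ∀ g : Fin m → W, (∀ i, g i ∈ F) →
    B (Fin.cons u (Fin.cons u g)) ≤ 0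

namespace IsHodgePairing

open MASetup (mixVec)

variable {m : ℕ} {W : Type*} [AddCommGroup W] [Module ℝ W]

section Comparison

variable {B : MultilinearMap ℝ (fun _ : Fin (m + 2) => W) ℝ} {F : Set W} {φ ψ φ₁ φ₂ : W}

theorem dirichletForm_nonneg (hB : IsHodgePairing B F) {u : W} (hu : u ∈ vectorSpan ℝ F)
    {g : Fin m → W} (hg : ∀ i, g i ∈ F) : 0 ≤ dirichletForm B g u u :=
  neg_nonneg.2 (hB.hodge u hu g hg)

theorem dirichletForm_sq_le (hB : IsHodgePairing B F) {u v : W} (hu : u ∈ vectorSpan ℝ F)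
    (hv : v ∈ vectorSpan ℝ F) {g : Fin m → W} (hg : ∀ i, g i ∈ F) :
    dirichletForm B g u v ^ 2 ≤ dirichletForm B g u u * dirichletForm B g v v :=
  ((dirichletForm B g).restrict (vectorSpan ℝ F)).apply_sq_le_of_symm
    (fun x => hB.dirichletForm_nonneg x.2 hg)
    ⟨fun x y => hB.symm.dirichletForm_comm g x y⟩ ⟨u, hu⟩ ⟨v, hv⟩

theorem antitone_map_cons_sub_mixVec (hB : IsHodgePairing B F) (hφ : φ ∈ F) (hψ : ψ ∈ F) :
    Antitone fun j => B (Fin.cons (φ - ψ) (mixVec φ ψ j)) := by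
  refine antitone_nat_of_succ_le fun j => ?_
  rcases lt_or_ge j (m + 1) with hj | hj
  · rw [← sub_nonneg, ← hB.symm.dirichletForm_mixVec_self φ ψ hj]
    exact hB.dirichletForm_nonneg (vsub_mem_vectorSpan ℝ hφ hψ) (mixVec_mem hφ hψ j)
  · rw [mixVec_of_le φ ψ hj, mixVec_of_le φ ψ (hj.trans j.le_succ)]

theorem dirichletForm_mixVec_le_aubinI (hB : IsHodgePairing B F) (hφ : φ ∈ F) (hψ : ψ ∈ F)
    {j : ℕ} (hj : j < m + 1) :
    dirichletForm B (mixVec φ ψ j) (φ - ψ) (φ - ψ) ≤ aubinI B φ ψ := by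
  have hanti := hB.antitone_map_cons_sub_mixVec hφ hψ
  have hfirst := hanti j.zero_le
  have hlast := hanti (Nat.succ_le_of_lt hj)
  simp only [mixVec_zero, mixVec_of_le φ ψ le_rfl] at hfirst hlast
  rw [hB.symm.dirichletForm_mixVec_self φ ψ hj]
  exact sub_le_sub hfirst hlast

theorem aubinI_nonneg (hB : IsHodgePairing B F) (hφ : φ ∈ F) (hψ : ψ ∈ F) : 0 ≤ aubinI B φ ψ :=
  (hB.dirichletForm_nonneg (vsub_mem_vectorSpan ℝ hφ hψ) (mixVec_mem hφ hψ 0)).trans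
    (hB.dirichletForm_mixVec_le_aubinI hφ hψ m.succ_pos)

theorem aubinI_le_mul_aubinJ (hB : IsHodgePairing B F) (hφ : φ ∈ F) (hψ : ψ ∈ F) :
    aubinI B φ ψ ≤ (m + 2) * aubinJ B ψ φ := by
  rw [hB.symm.add_two_mul_aubinJ]
  have hterm : ∀ j ∈ range (m + 2),
      0 ≤ B (Fin.cons (φ - ψ) fun _ => ψ) - B (Fin.cons (φ - ψ) (mixVec φ ψ j)) := by
    intro j _
    have := hB.antitone_map_cons_sub_mixVec hφ hψ j.zero_le
    simp only [mixVec_zero] at this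
    exact sub_nonneg.2 this
  have := single_le_sum hterm (self_mem_range_succ (m + 1))
  rwa [mixVec_of_le φ ψ le_rfl] at this

theorem aubinJ_nonneg (hB : IsHodgePairing B F) (hφ : φ ∈ F) (hψ : ψ ∈ F) : 0 ≤ aubinJ B ψ φ :=
  nonneg_of_mul_nonneg_right ((hB.aubinI_nonneg hφ hψ).trans (hB.aubinI_le_mul_aubinJ hφ hψ))
    (by positivity)

theorem aubinJ_le_aubinI (hB : IsHodgePairing B F) (hφ : φ ∈ F) (hψ : ψ ∈ F) :
    aubinJ B ψ φ ≤ aubinI B φ ψ := by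
  rw [aubinI_eq_aubinJ_add_aubinJ]
  exact le_add_of_nonneg_right (hB.aubinJ_nonneg hψ hφ)

theorem aubinI_midpoint_le (hB : IsHodgePairing B F) (hF : Convex ℝ F) (hφ₁ : φ₁ ∈ F)
    (hφ₂ : φ₂ ∈ F) (hψ : ψ ∈ F) :
    aubinI B (midpoint ℝ φ₁ φ₂) ψ ≤ (m + 2) * max (aubinI B φ₁ ψ) (aubinI B φ₂ ψ) := by
  have hv := hF.midpoint_mem hφ₁ hφ₂
  refine (hB.aubinI_le_mul_aubinJ hv hψ).trans (mul_le_mul_of_nonneg_left ?_ (by positivity))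
  have h₁ := (hB.aubinJ_le_aubinI hφ₁ hψ).trans (le_max_left _ (aubinI B φ₂ ψ))
  have h₂ := (hB.aubinJ_le_aubinI hφ₂ hψ).trans (le_max_right (aubinI B φ₁ ψ) _)
  linarith [aubinJ_add_aubinJ_eq_midpoint B φ₁ φ₂ ψ, hB.aubinJ_nonneg hφ₁ hv,
    hB.aubinJ_nonneg hφ₂ hv]

theorem dirichletForm_midpoint_le_aubinJ_add_aubinJ (hB : IsHodgePairing B F) (hF : Convex ℝ F)
    (hφ₁ : φ₁ ∈ F) (hφ₂ : φ₂ ∈ F) (hψ : ψ ∈ F) :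
    dirichletForm B (fun _ => midpoint ℝ φ₁ φ₂) (φ₁ - φ₂) (φ₁ - φ₂) ≤
      2 * (m + 2) * (aubinJ B ψ φ₁ + aubinJ B ψ φ₂) := by
  set v := midpoint ℝ φ₁ φ₂ with hv_def
  have hv : v ∈ F := hF.midpoint_mem hφ₁ hφ₂
  have hform : ∀ φ ∈ F,
      dirichletForm B (fun _ => v) (φ - v) (φ - v) ≤ (m + 2) * aubinJ B v φ := fun φ hφ => by
    have := hB.dirichletForm_mixVec_le_aubinI hφ hv m.succ_pos
    rw [mixVec_zero] at this
    exact this.trans (hB.aubinI_le_mul_aubinJ hφ hv)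
  have h₁ : φ₁ - φ₂ = (2 : ℝ) • (φ₁ - v) := by
    rw [hv_def, left_sub_midpoint, smul_smul, mul_invOf_self, one_smul]
  have h₂ : φ₁ - φ₂ = (-2 : ℝ) • (φ₂ - v) := by
    rw [hv_def, right_sub_midpoint, neg_smul, smul_smul, mul_invOf_self, one_smul, neg_sub]
  have e₁ : dirichletForm B (fun _ => v) (φ₁ - φ₂) (φ₁ - φ₂) =
      4 * dirichletForm B (fun _ => v) (φ₁ - v) (φ₁ - v) := by
    simp only [h₁, map_smul, LinearMap.smul_apply, smul_eq_mul]
    ring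
  have e₂ : dirichletForm B (fun _ => v) (φ₁ - φ₂) (φ₁ - φ₂) =
      4 * dirichletForm B (fun _ => v) (φ₂ - v) (φ₂ - v) := by
    simp only [h₂, map_smul, LinearMap.smul_apply, smul_eq_mul]
    ring
  have hJ : 0 ≤ (m + 2) * aubinJ B ψ v := mul_nonneg (by positivity) (hB.aubinJ_nonneg hv hψ)
  rw [aubinJ_add_aubinJ_eq_midpoint]
  linarith [hform φ₁ hφ₁, hform φ₂ hφ₂]

theorem dirichletForm_midpoint_le_aubinI (hB : IsHodgePairing B F) (hF : Convex ℝ F)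
    (hφ₁ : φ₁ ∈ F) (hφ₂ : φ₂ ∈ F) :
    dirichletForm B (fun _ => midpoint ℝ φ₁ φ₂) (φ₁ - φ₂) (φ₁ - φ₂) ≤
      2 * (m + 2) * aubinI B φ₁ φ₂ := by
  refine (hB.dirichletForm_midpoint_le_aubinJ_add_aubinJ hF hφ₁ hφ₂ hφ₂).trans ?_
  rw [aubinJ_self, add_zero]
  exact mul_le_mul_of_nonneg_left (hB.aubinJ_le_aubinI hφ₁ hφ₂) (by positivity)

theorem dirichletForm_midpoint_le_max_aubinI (hB : IsHodgePairing B F) (hF : Convex ℝ F)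
    (hφ₁ : φ₁ ∈ F) (hφ₂ : φ₂ ∈ F) (hψ : ψ ∈ F) :
    dirichletForm B (fun _ => midpoint ℝ φ₁ φ₂) (φ₁ - φ₂) (φ₁ - φ₂) ≤
      4 * ((m + 2) * max (aubinI B φ₁ ψ) (aubinI B φ₂ ψ)) := by
  have h₁ := (hB.aubinJ_le_aubinI hφ₁ hψ).trans (le_max_left _ (aubinI B φ₂ ψ))
  have h₂ := (hB.aubinJ_le_aubinI hφ₂ hψ).trans (le_max_right (aubinI B φ₁ ψ) _)
  calc dirichletForm B (fun _ => midpoint ℝ φ₁ φ₂) (φ₁ - φ₂) (φ₁ - φ₂)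
      ≤ 2 * (m + 2) * (aubinJ B ψ φ₁ + aubinJ B ψ φ₂) :=
        hB.dirichletForm_midpoint_le_aubinJ_add_aubinJ hF hφ₁ hφ₂ hψ
    _ ≤ 2 * (m + 2) * (max (aubinI B φ₁ ψ) (aubinI B φ₂ ψ) +
          max (aubinI B φ₁ ψ) (aubinI B φ₂ ψ)) := by gcongr
    _ = 4 * ((m + 2) * max (aubinI B φ₁ ψ) (aubinI B φ₂ ψ)) := by ring

end Comparison

theorem sq_dirichletForm_cons_sub_le {B : MultilinearMap ℝ (fun _ : Fin (m + 3) => W) ℝ}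
    {F : Set W} (hB : IsHodgePairing B F) {φ₁ φ₂ x y : W} (hφ₁ : φ₁ ∈ F) (hφ₂ : φ₂ ∈ F)
    (hx : x ∈ F) (hy : y ∈ F) {g : Fin m → W} (hg : ∀ i, g i ∈ F) :
    (dirichletForm B (Fin.cons x g) (φ₁ - φ₂) (φ₁ - φ₂) -
        dirichletForm B (Fin.cons y g) (φ₁ - φ₂) (φ₁ - φ₂)) ^ 2 ≤
      8 * dirichletForm B (Fin.cons (midpoint ℝ φ₁ φ₂) g) (φ₁ - φ₂) (φ₁ - φ₂) *
        dirichletForm B (Fin.cons (midpoint ℝ φ₁ φ₂) g) (x - y) (x - y) := by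
  have hu : φ₁ - φ₂ ∈ vectorSpan ℝ F := vsub_mem_vectorSpan ℝ hφ₁ hφ₂
  have hw : x - y ∈ vectorSpan ℝ F := vsub_mem_vectorSpan ℝ hx hy
  set u := φ₁ - φ₂ with hu_def
  set w := x - y with hw_def
  set Q₁ := dirichletForm B (Fin.cons φ₁ g)
  set Q₂ := dirichletForm B (Fin.cons φ₂ g)
  have hswap : dirichletForm B (Fin.cons x g) u u - dirichletForm B (Fin.cons y g) u u =
      Q₁ u w - Q₂ u w := by
    rw [← LinearMap.sub_apply, ← LinearMap.sub_apply, ← dirichletForm_cons_sub, ← hw_def,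
      hB.symm.dirichletForm_cons_comm, hu_def, dirichletForm_cons_sub]
    rfl
  have hmid : ∀ z, 2 * dirichletForm B (Fin.cons (midpoint ℝ φ₁ φ₂) g) z z = Q₁ z z + Q₂ z z :=
    fun z => congrArg (fun Q : LinearMap.BilinForm ℝ W => Q z z)
      (dirichletForm_cons_midpoint B φ₁ φ₂ g)
  have hg₁ : ∀ i, (Fin.cons φ₁ g : Fin (m + 1) → W) i ∈ F := Fin.cases hφ₁ hg
  have hg₂ : ∀ i, (Fin.cons φ₂ g : Fin (m + 1) → W) i ∈ F := Fin.cases hφ₂ hg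
  have hcross : 0 ≤ Q₁ u u * Q₂ w w + Q₂ u u * Q₁ w w :=
    add_nonneg (mul_nonneg (hB.dirichletForm_nonneg hu hg₁) (hB.dirichletForm_nonneg hw hg₂))
      (mul_nonneg (hB.dirichletForm_nonneg hu hg₂) (hB.dirichletForm_nonneg hw hg₁))
  calc (dirichletForm B (Fin.cons x g) u u - dirichletForm B (Fin.cons y g) u u) ^ 2
      = (Q₁ u w - Q₂ u w) ^ 2 := by rw [hswap]
    _ ≤ 2 * (Q₁ u w ^ 2 + Q₂ u w ^ 2) := by linarith [sq_nonneg (Q₁ u w + Q₂ u w)]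
    _ ≤ 2 * (Q₁ u u * Q₁ w w + Q₂ u u * Q₂ w w) := by
        gcongr
        exacts [hB.dirichletForm_sq_le hu hw hg₁, hB.dirichletForm_sq_le hu hw hg₂]
    _ ≤ 2 * ((Q₁ u u + Q₂ u u) * (Q₁ w w + Q₂ w w)) := by linarith
    _ = _ := by rw [← hmid, ← hmid]; ring

theorem sq_dirichletForm_mixVec_succ_sub_le {B : MultilinearMap ℝ (fun _ : Fin (m + 2) => W) ℝ}
    {F : Set W} (hB : IsHodgePairing B F) (hF : Convex ℝ F) {φ₁ φ₂ ψ : W} (hφ₁ : φ₁ ∈ F)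
    (hφ₂ : φ₂ ∈ F) (hψ : ψ ∈ F) {k : ℕ} (hk : k < m) :
    (dirichletForm B (mixVec ψ (midpoint ℝ φ₁ φ₂) (k + 1)) (φ₁ - φ₂) (φ₁ - φ₂) -
        dirichletForm B (mixVec ψ (midpoint ℝ φ₁ φ₂) k) (φ₁ - φ₂) (φ₁ - φ₂)) ^ 2 ≤
      8 * dirichletForm B (mixVec ψ (midpoint ℝ φ₁ φ₂) k) (φ₁ - φ₂) (φ₁ - φ₂) *
        aubinI B ψ (midpoint ℝ φ₁ φ₂) := by
  have hv := hF.midpoint_mem hφ₁ hφ₂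
  obtain ⟨n, rfl⟩ := Nat.exists_eq_succ_of_ne_zero (Nat.ne_zero_of_lt hk)
  have hterm := hB.dirichletForm_mixVec_le_aubinI hψ hv (hk.trans (Nat.lt_succ_self _))
  have hpos := hB.dirichletForm_nonneg (vsub_mem_vectorSpan ℝ hφ₁ hφ₂) (mixVec_mem hψ hv k)
  refine le_trans ?_ (mul_le_mul_of_nonneg_left hterm (mul_nonneg (by norm_num) hpos))
  lift k to Fin (n + 1) using hk
  rw [← insertNth_left_mixVec, ← insertNth_right_mixVec ψ (midpoint ℝ φ₁ φ₂) k,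
    hB.symm.dirichletForm_insertNth, hB.symm.dirichletForm_insertNth]
  exact hB.sq_dirichletForm_cons_sub_le hφ₁ hφ₂ hψ hv (mixVec_mem hψ hv k)

end IsHodgePairing

section RealSequences

variable {b : ℕ → ℝ} {m : ℕ}

theorem le_three_pow_mul_of_sq_sub_le {c H : ℝ} (hc : 2 ≤ c) (hb : ∀ k, 0 ≤ b k) (hH : 0 ≤ H)
    (h₀ : b 0 ≤ c * H) (hstep : ∀ k < m, (b (k + 1) - b k) ^ 2 ≤ 8 * b k * H) :
    ∀ k ≤ m, b k ≤ 3 ^ k * c * H := by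
  intro k hk
  induction k with
  | zero => simpa using h₀
  | succ k ih =>
    have hgrowth : b (k + 1) - b k ≤ b k + 2 * H := by
      refine le_of_sq_le_sq ((hstep k hk).trans ?_) (by linarith [hb k])
      linarith [sq_nonneg (b k - 2 * H)]
    have hcH : 2 * H ≤ 3 ^ k * c * H := by
      gcongr
      exact hc.trans (le_mul_of_one_le_left (by linarith) (one_le_pow₀ (by norm_num)))
    calc b (k + 1) ≤ 2 * b k + 2 * H := by linarith
      _ ≤ 2 * (3 ^ k * c * H) + 3 ^ k * c * H := by gcongr; exact ih (Nat.le_of_succ_le hk)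
      _ = 3 ^ (k + 1) * c * H := by ring

theorem sq_succ_le_of_sq_sub_le {c H : ℝ} (hc : 2 ≤ c) (hb : ∀ k, 0 ≤ b k) (hH : 0 ≤ H)
    (h₀ : b 0 ≤ c * H) (hstep : ∀ k < m, (b (k + 1) - b k) ^ 2 ≤ 8 * b k * H) :
    ∀ k < m, b (k + 1) ^ 2 ≤ (2 * 3 ^ m * c + 16) * H * b k := by
  intro k hk
  have hbound : b k ≤ 3 ^ m * c * H := by
    refine (le_three_pow_mul_of_sq_sub_le hc hb hH h₀ hstep k hk.le).trans ?_
    gcongr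
    norm_num
  calc b (k + 1) ^ 2 ≤ 2 * (b (k + 1) - b k) ^ 2 + 2 * b k * b k := by
        linarith [sq_nonneg (b (k + 1) - 2 * b k)]
    _ ≤ 2 * (8 * b k * H) + 2 * b k * (3 ^ m * c * H) := by
        gcongr
        exacts [hstep k hk, mul_nonneg zero_le_two (hb k)]
    _ = (2 * 3 ^ m * c + 16) * H * b k := by ring

theorem le_rpow_mul_rpow_of_sq_succ_le {A : ℝ} (hb : ∀ k, 0 ≤ b k) (hA : 0 ≤ A)
    (hstep : ∀ k < m, b (k + 1) ^ 2 ≤ A * b k) :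
    b m ≤ b 0 ^ ((1 : ℝ) / 2 ^ m) * A ^ (1 - (1 : ℝ) / 2 ^ m) := by
  induction m with
  | zero => simp
  | succ m ih =>
    have hθ : (0 : ℝ) ≤ 1 - 1 / 2 ^ m :=
      sub_nonneg.2 (div_le_one_of_le₀ (one_le_pow₀ one_le_two) (by positivity))
    have hb₀ := hb 0
    calc b (m + 1) ≤ √(A * b m) := Real.le_sqrt_of_sq_le (hstep m m.lt_succ_self)
      _ ≤ √(A * (b 0 ^ ((1 : ℝ) / 2 ^ m) * A ^ (1 - (1 : ℝ) / 2 ^ m))) := by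
          gcongr
          exact ih fun k hk => hstep k (hk.trans m.lt_succ_self)
      _ = √(b 0 ^ ((1 : ℝ) / 2 ^ m) * A ^ (1 + (1 - (1 : ℝ) / 2 ^ m))) := by
          rw [Real.rpow_add_of_nonneg hA zero_le_one hθ, Real.rpow_one]
          ring_nf
      _ = b 0 ^ ((1 : ℝ) / 2 ^ (m + 1)) * A ^ (1 - (1 : ℝ) / 2 ^ (m + 1)) := by
          rw [Real.sqrt_eq_rpow, Real.mul_rpow (by positivity) (by positivity),
            ← Real.rpow_mul hb₀, ← Real.rpow_mul hA, pow_succ]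
          congr 2 <;> field_simp
          ring

theorem mul_rpow_mul_mul_rpow_one_sub {D x y θ : ℝ} (hD : 0 < D) (hx : 0 ≤ x) (hy : 0 ≤ y) :
    (D * x) ^ θ * (D * y) ^ (1 - θ) = D * x ^ θ * y ^ (1 - θ) := by
  have hDθ : D ^ θ * D ^ (1 - θ) = D := by
    rw [← Real.rpow_add hD, add_sub_cancel, Real.rpow_one]
  rw [Real.mul_rpow hD.le hx, Real.mul_rpow hD.le hy]
  linear_combination x ^ θ * y ^ (1 - θ) * hDθ

end RealSequences

theorem hodge_interpolation_general {m : ℕ} {W : Type*} [AddCommGroup W] [Module ℝ W]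
    {B : MultilinearMap ℝ (fun _ : Fin (m + 2) => W) ℝ} {F : Set W} (hB : IsHodgePairing B F)
    (hF : Convex ℝ F) {φ₁ φ₂ ψ : W} (hφ₁ : φ₁ ∈ F) (hφ₂ : φ₂ ∈ F) (hψ : ψ ∈ F) :
    -B (Fin.cons (φ₁ - φ₂) (Fin.cons (φ₁ - φ₂) fun _ : Fin m => ψ)) ≤
      8 * (3 ^ m + 2) * (m + 2) * aubinI B φ₁ φ₂ ^ ((1 : ℝ) / 2 ^ m) *
        max (aubinI B φ₁ ψ) (aubinI B φ₂ ψ) ^ (1 - (1 : ℝ) / 2 ^ m) := by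
  set v := midpoint ℝ φ₁ φ₂
  set M := max (aubinI B φ₁ ψ) (aubinI B φ₂ ψ)
  set D : ℝ := 8 * (3 ^ m + 2) * (m + 2) with hD
  let b : ℕ → ℝ := fun k => dirichletForm B (MASetup.mixVec ψ v k) (φ₁ - φ₂) (φ₁ - φ₂)
  have hI : 0 ≤ aubinI B φ₁ φ₂ := hB.aubinI_nonneg hφ₁ hφ₂
  have hM : 0 ≤ M := (hB.aubinI_nonneg hφ₁ hψ).trans (le_max_left _ _)
  have hb : ∀ k, 0 ≤ b k := fun k =>
    hB.dirichletForm_nonneg (vsub_mem_vectorSpan ℝ hφ₁ hφ₂)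
      (mixVec_mem hψ (hF.midpoint_mem hφ₁ hφ₂) k)
  have hb₀ : b 0 = dirichletForm B (fun _ => v) (φ₁ - φ₂) (φ₁ - φ₂) := by
    simp only [b, mixVec_zero]
  have hb₀I : b 0 ≤ D * aubinI B φ₁ φ₂ := by
    refine hb₀.trans_le ((hB.dirichletForm_midpoint_le_aubinI hF hφ₁ hφ₂).trans ?_)
    rw [hD]
    gcongr
    linarith [pow_pos (three_pos (α := ℝ)) m]
  have hstep : ∀ k < m, (b (k + 1) - b k) ^ 2 ≤ 8 * b k * ((m + 2) * M) := fun k hk =>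
    (hB.sq_dirichletForm_mixVec_succ_sub_le hF hφ₁ hφ₂ hψ hk).trans <|
      mul_le_mul_of_nonneg_left
        ((aubinI_comm B ψ v).trans_le (hB.aubinI_midpoint_le hF hφ₁ hφ₂ hψ))
        (mul_nonneg (by norm_num) (hb k))
  have hsq : ∀ k < m, b (k + 1) ^ 2 ≤ D * M * b k := fun k hk =>
    (sq_succ_le_of_sq_sub_le (c := 4) (by norm_num) hb (by positivity)
      (hb₀.trans_le (hB.dirichletForm_midpoint_le_max_aubinI hF hφ₁ hφ₂ hψ)) hstep k hk).trans_eq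
      (by rw [hD]; ring)
  calc -B (Fin.cons (φ₁ - φ₂) (Fin.cons (φ₁ - φ₂) fun _ => ψ))
      = b m := by simp only [b, mixVec_of_le ψ v le_rfl, dirichletForm_apply]
    _ ≤ b 0 ^ ((1 : ℝ) / 2 ^ m) * (D * M) ^ (1 - (1 : ℝ) / 2 ^ m) :=
        le_rpow_mul_rpow_of_sq_succ_le hb (by positivity) hsq
    _ ≤ (D * aubinI B φ₁ φ₂) ^ ((1 : ℝ) / 2 ^ m) * (D * M) ^ (1 - (1 : ℝ) / 2 ^ m) := by
        gcongr
        exact hb 0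
    _ = D * aubinI B φ₁ φ₂ ^ ((1 : ℝ) / 2 ^ m) * M ^ (1 - (1 : ℝ) / 2 ^ m) :=
        mul_rpow_mul_mul_rpow_one_sub (by positivity) hI hM

theorem MASetup.isHodgePairing {m : ℕ} {W : Type*} [AddCommGroup W] [Module ℝ W]
    (S : MASetup m W) : IsHodgePairing S.B S.F where
  symm := S.symm
  hodge u hu := by
    refine S.hodge u (Submodule.span_mono ?_ hu)
    rintro _ ⟨φ, hφ, ψ, hψ, rfl⟩
    exact Or.inl ⟨φ, hφ, ψ, hψ, rfl⟩

/-- there is `C > 0` depending only on `n = m + 1` such that for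
every setup and all `φ₁, φ₂, ψ ∈ F`:
`-B(φ₁-φ₂, φ₁-φ₂, ψ, …, ψ) ≤ C I(φ₁,φ₂)^{1/2^{n-1}} (max I(φᵢ,ψ))^{1-1/2^{n-1}}`. -/
theorem hodge_interpolation (m : ℕ) :
    ∃ C : ℝ, 0 < C ∧
      ∀ (W : Type*) [AddCommGroup W] [Module ℝ W] (S : MASetup m W),
        ∀ φ₁ ∈ S.F, ∀ φ₂ ∈ S.F, ∀ ψ ∈ S.F,
          -S.B (Fin.cons (φ₁ - φ₂) (Fin.cons (φ₁ - φ₂) fun _ : Fin m => ψ)) ≤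
            C * S.Ifun φ₁ φ₂ ^ ((1 : ℝ) / 2 ^ m) *
              (max (S.Ifun φ₁ ψ) (S.Ifun φ₂ ψ)) ^ (1 - (1 : ℝ) / 2 ^ m) := by
  refine ⟨8 * (3 ^ m + 2) * (m + 2), by positivity, ?_⟩
  intro W _ _ S φ₁ hφ₁ φ₂ hφ₂ ψ hψ
  exact hodge_interpolation_general S.isHodgePairing S.Fconv hφ₁ hφ₂ hψ
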